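/- arXiv:2401.17147 — 3 statements merged into one kernel-verified Lean document; each statement's English description precedes it below -/
import Mathlib

section
/- Let {y_n}_{n≥0} be a sequence of positive real numbers satisfying the recursive inequalities y_{n+1} ≤ c bⁿ y_n^{1+α} for all n ≥ 0, where b > 1 and c, α ∈ (0,∞). If y₀ ≤ c^{−1/α} b^{−1/α²}, then lim_{n→∞} y_n = 0. -/
/-!
If `b * r ^ α = 1` and `c * K ^ α = r`, the geometric sequence `K * r ^ n` solves the recursion with
equality. This forces `r = b ^ (-1 / α)` and `K = c ^ (-1 / α) * b ^ (-1 / α ^ 2)`, the bound on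
`y 0`. As `t ↦ c * b ^ n * t ^ (1 + α)` is increasing on `[0, ∞)`, a sequence starting below `K`
stays below `K * r ^ n`, and `r < 1` because `b > 1`.
-/

open Filter Topology

theorem seq_le_seq_of_monotoneOn {β : Type*} [Preorder β] {s : Set β} {f : ℕ → β → β}
    {y z : ℕ → β} (hf : ∀ n, MonotoneOn (f n) s) (hys : ∀ n, y n ∈ s) (hzs : ∀ n, z n ∈ s)
    (h0 : y 0 ≤ z 0) (hy : ∀ n, y (n + 1) ≤ f n (y n)) (hz : ∀ n, f n (z n) ≤ z (n + 1)) (n : ℕ) :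
    y n ≤ z n := by
  induction n with
  | zero => exact h0
  | succ n ih => exact (hy n).trans ((hf n (hys n) (hzs n) ih).trans (hz n))

/-- The critical initial value of De Giorgi's recursion `y (n + 1) ≤ c * b ^ n * y n ^ (1 + α)`:
started there with equality at every step, the solution is a geometric sequence. -/
noncomputable def deGiorgiThreshold (b c α : ℝ) : ℝ :=
  c ^ (-1 / α) * b ^ (-1 / α ^ 2)

section Recursion

variable {b c α K r : ℝ}

theorem mul_pow_mul_geometric_rpow_one_add (hK : 0 ≤ K) (hr : 0 ≤ r) (hα : 1 + α ≠ 0) (n : ℕ) :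
    c * b ^ n * (K * r ^ n) ^ (1 + α) = c * K ^ α * (b * r ^ α) ^ n * (K * r ^ n) := by
  have hpow : (r ^ n) ^ α = (r ^ α) ^ n := (Real.rpow_pow_comm hr α n).symm
  rw [Real.rpow_one_add' (by positivity) hα, Real.mul_rpow hK (by positivity), hpow]
  ring

theorem mul_pow_mul_geometric_rpow_le_succ (hb : 0 ≤ b) (hK : 0 ≤ K) (hr : 0 ≤ r)
    (hα : 1 + α ≠ 0) (hcK : c * K ^ α ≤ r) (hbr : b * r ^ α ≤ 1) (n : ℕ) :
    c * b ^ n * (K * r ^ n) ^ (1 + α) ≤ K * r ^ (n + 1) :=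
  calc c * b ^ n * (K * r ^ n) ^ (1 + α)
    _ = c * K ^ α * (b * r ^ α) ^ n * (K * r ^ n) := mul_pow_mul_geometric_rpow_one_add hK hr hα n
    _ ≤ r * 1 * (K * r ^ n) := by
      gcongr
      exact pow_le_one₀ (by positivity) hbr
    _ = K * r ^ (n + 1) := by ring

theorem le_geometric_of_le_mul_pow_mul_rpow {y : ℕ → ℝ} (hy : ∀ n, 0 ≤ y n) (hb : 0 ≤ b)
    (hc : 0 ≤ c) (hr : 0 ≤ r) (hα : 0 < 1 + α) (hcK : c * K ^ α ≤ r) (hbr : b * r ^ α ≤ 1)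
    (hrec : ∀ n, y (n + 1) ≤ c * b ^ n * y n ^ (1 + α)) (h0 : y 0 ≤ K) (n : ℕ) :
    y n ≤ K * r ^ n := by
  have hK : 0 ≤ K := (hy 0).trans h0
  have hmono : ∀ n, MonotoneOn (fun t : ℝ ↦ c * b ^ n * t ^ (1 + α)) (Set.Ici 0) := fun n ↦
    (monotone_mul_left_of_nonneg (by positivity)).comp_monotoneOn
      (Real.monotoneOn_rpow_Ici_of_exponent_nonneg hα.le)
  have hsuper : ∀ n, c * b ^ n * (K * r ^ n) ^ (1 + α) ≤ K * r ^ (n + 1) :=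
    mul_pow_mul_geometric_rpow_le_succ hb hK hr hα.ne' hcK hbr
  exact seq_le_seq_of_monotoneOn (z := fun n ↦ K * r ^ n) hmono hy
    (fun n ↦ mul_nonneg hK (pow_nonneg hr n)) (by simpa using h0) hrec hsuper n

theorem mul_rpow_neg_one_div_rpow (hb : 0 < b) (hα : α ≠ 0) : b * (b ^ (-1 / α)) ^ α = 1 := by
  rw [← Real.rpow_mul hb.le, div_mul_cancel₀ _ hα, Real.rpow_neg_one, mul_inv_cancel₀ hb.ne']

theorem mul_deGiorgiThreshold_rpow (hb : 0 < b) (hc : 0 < c) (hα : α ≠ 0) :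
    c * deGiorgiThreshold b c α ^ α = b ^ (-1 / α) := by
  have hexp : -1 / α ^ 2 * α = -1 / α := by field_simp
  rw [deGiorgiThreshold, Real.mul_rpow (by positivity) (by positivity), ← mul_assoc,
    mul_rpow_neg_one_div_rpow hc hα, one_mul, ← Real.rpow_mul hb.le, hexp]

theorem le_deGiorgiThreshold_mul_pow {y : ℕ → ℝ} (hy : ∀ n, 0 ≤ y n) (hb : 0 < b) (hc : 0 < c)
    (hα : 0 < α) (hrec : ∀ n, y (n + 1) ≤ c * b ^ n * y n ^ (1 + α))
    (h0 : y 0 ≤ deGiorgiThreshold b c α) (n : ℕ) :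
    y n ≤ deGiorgiThreshold b c α * (b ^ (-1 / α)) ^ n :=
  le_geometric_of_le_mul_pow_mul_rpow hy hb.le hc.le (by positivity) (by positivity)
    (mul_deGiorgiThreshold_rpow hb hc hα.ne').le (mul_rpow_neg_one_div_rpow hb hα.ne').le hrec h0 n

end Recursion

/-- If a sequence of positive numbers satisfies
`y_{n+1} ≤ c bⁿ y_n^{1+α}` with `b > 1`, `c, α > 0`, and
`y₀ ≤ c^{−1/α} b^{−1/α²}`, then `y_n → 0`. -/
theorem de_giorgi_fast_convergence (y : ℕ → ℝ) (b c α : ℝ)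
    (hy : ∀ n, 0 < y n) (hb : 1 < b) (hc : 0 < c) (hα : 0 < α)
    (hrec : ∀ n, y (n + 1) ≤ c * b ^ n * y n ^ (1 + α))
    (h0 : y 0 ≤ c ^ (-1 / α) * b ^ (-1 / α ^ 2)) :
    Tendsto y atTop (𝓝 0) := by
  have hb0 : 0 < b := one_pos.trans hb
  have hr : b ^ (-1 / α) < 1 :=
    Real.rpow_lt_one_of_one_lt_of_neg hb (div_neg_of_neg_of_pos neg_one_lt_zero hα)
  have hbound : ∀ n, y n ≤ deGiorgiThreshold b c α * (b ^ (-1 / α)) ^ n :=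
    le_deGiorgiThreshold_mul_pow (fun n ↦ (hy n).le) hb0 hc hα hrec h0
  have hlim : Tendsto (fun n : ℕ ↦ deGiorgiThreshold b c α * (b ^ (-1 / α)) ^ n) atTop (𝓝 0) := by
    simpa using (tendsto_pow_atTop_nhds_zero_of_lt_one (by positivity) hr).const_mul
      (deGiorgiThreshold b c α)
  exact squeeze_zero (fun n ↦ (hy n).le) hbound hlim
end

section
/- Let (Q, μ) be a measure space, r > 0, and u a measurable function on Q such that 0 < ∫_Q |u|^{2s} dμ < ∞ for all s in a neighborhood of r and ∫_Q |u|^{2r} |ln|u|| dμ < ∞. Then lim_{ℓ→r} ( ‖u‖_{2ℓ,Q} / ‖u‖_{2r,Q} )^{1/(ℓ−r)} = ‖u‖_{2r,Q}^{−1/r} · exp( (∫_Q |u|^{2r} ln|u| dμ) / ( r ∫_Q |u|^{2r} dμ ) ). -/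
open MeasureTheory Filter Topology

/-!
Off the zero set of `u` we have `|u| ^ p = exp (p * log |u|)`, so for `p ≠ 0` the integral
`I p = ∫ |u| ^ p` is the moment generating function of `log |u|` with respect to `μ` restricted to
the support of `u`, and hence `I' p = ∫ |u| ^ p * log |u|`. The limit of
`(g ℓ / g r) ^ (1 / (ℓ - r))` is the exponential of the logarithmic derivative of `g` at `r`, here
with `g ℓ = I (2 * ℓ) ^ (1 / (2 * ℓ))`.
-/

section AbsRpow

open Function ProbabilityTheory

variable {Q : Type*} {u : Q → ℝ} {p : ℝ}

lemma abs_rpow_eq_indicator_exp_mul_log (hp : p ≠ 0) :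
    (fun x => |u x| ^ p) = (support u).indicator fun x => Real.exp (p * Real.log (u x)) := by
  ext x
  by_cases hx : u x = 0
  · simp [hx, Real.zero_rpow hp]
  · rw [Set.indicator_of_mem hx, Real.rpow_def_of_pos (abs_pos.2 hx), Real.log_abs, mul_comm]

variable [MeasurableSpace Q] {μ : Measure Q}

lemma mem_integrableExpSet_of_integrable_abs_rpow (hu : NullMeasurableSet (support u) μ)
    (hp : p ≠ 0) (h : Integrable (fun x => |u x| ^ p) μ) :
    p ∈ integrableExpSet (fun x => Real.log (u x)) (μ.restrict (support u)) := by
  rw [abs_rpow_eq_indicator_exp_mul_log hp] at h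
  refine h.integrableOn.congr ?_
  filter_upwards [ae_restrict_mem₀ hu] with x hx
  exact Set.indicator_of_mem hx _

lemma integral_abs_rpow_eq_mgf (hu : NullMeasurableSet (support u) μ) (hp : p ≠ 0) :
    ∫ x, |u x| ^ p ∂μ = mgf (fun x => Real.log (u x)) (μ.restrict (support u)) p := by
  rw [abs_rpow_eq_indicator_exp_mul_log hp, integral_indicator₀ hu, mgf]

lemma integral_abs_rpow_mul_log_eq_setIntegral :
    ∫ x, |u x| ^ p * Real.log |u x| ∂μ =
      ∫ x in support u, Real.log (u x) * Real.exp (p * Real.log (u x)) ∂μ := by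
  rw [setIntegral_eq_integral_of_forall_compl_eq_zero fun x hx => by simp [notMem_support.1 hx]]
  congr 1 with x
  by_cases hx : u x = 0
  · simp [hx]
  · rw [Real.rpow_def_of_pos (abs_pos.2 hx), Real.log_abs, mul_comm, mul_comm p]

lemma hasDerivAt_integral_abs_rpow (hu : AEMeasurable u μ) (hp : p ≠ 0)
    (h : ∀ᶠ s in 𝓝 p, Integrable (fun x => |u x| ^ s) μ) :
    HasDerivAt (fun s => ∫ x, |u x| ^ s ∂μ) (∫ x, |u x| ^ p * Real.log |u x| ∂μ) p := by
  have hsupp : NullMeasurableSet (support u) μ :=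
    hu.nullMeasurable (measurableSet_singleton 0).compl
  have hne : ∀ᶠ s in 𝓝 p, s ≠ 0 := eventually_ne_nhds hp
  have hmem : p ∈ interior
      (integrableExpSet (fun x => Real.log (u x)) (μ.restrict (support u))) := by
    rw [mem_interior_iff_mem_nhds]
    filter_upwards [h, hne] with s hs hs₀
    exact mem_integrableExpSet_of_integrable_abs_rpow hsupp hs₀ hs
  rw [integral_abs_rpow_mul_log_eq_setIntegral]
  refine (hasDerivAt_mgf hmem).congr_of_eventuallyEq ?_
  filter_upwards [hne] with s hs
  exact integral_abs_rpow_eq_mgf hsupp hs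

end AbsRpow

lemma hasDerivAt_rpow_one_div {f : ℝ → ℝ} {f' p : ℝ} (hf : HasDerivAt f f' p) (hfp : 0 < f p)
    (hp : p ≠ 0) :
    HasDerivAt (fun s => f s ^ (1 / s))
      (f p ^ (1 / p) * (f' / (p * f p) - Real.log (f p) / p ^ 2)) p := by
  simp only [one_div]
  convert! hf.rpow (hasDerivAt_inv hp) hfp using 1
  rw [Real.rpow_sub_one hfp.ne']
  field_simp
  ring

lemma tendsto_div_rpow_one_div_sub {g : ℝ → ℝ} {g' r : ℝ} (hg : HasDerivAt g g' r)
    (hgr : 0 < g r) :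
    Tendsto (fun ℓ => (g ℓ / g r) ^ (1 / (ℓ - r))) (𝓝[≠] r) (𝓝 (Real.exp (g' / g r))) := by
  have hslope := (Real.continuous_exp.tendsto _).comp (hg.log hgr.ne').tendsto_slope
  refine hslope.congr' ?_
  filter_upwards [nhdsWithin_le_nhds (hg.continuousAt.eventually_const_lt hgr)] with ℓ hℓ
  rw [Function.comp_apply, slope_def_field, Real.rpow_def_of_pos (div_pos hℓ hgr),
    Real.log_div hℓ.ne' hgr.ne', mul_one_div]

/-- For a measurable `u` on a measure space `(Q,μ)` with
`0 < ∫ |u|^{2s} < ∞` for all `s` near `r > 0` and `∫ |u|^{2r}|ln|u|| < ∞`,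
`lim_{ℓ→r} (‖u‖_{2ℓ}/‖u‖_{2r})^{1/(ℓ−r)}
  = ‖u‖_{2r}^{−1/r} exp( (∫ |u|^{2r} ln|u|) / (r ∫ |u|^{2r}) )`. -/
theorem lp_norm_logarithmic_derivative {Q : Type*} [MeasurableSpace Q]
    (μ : Measure Q) (r : ℝ) (hr : 0 < r) (u : Q → ℝ) (hu : Measurable u)
    (hnear : ∃ ε > (0:ℝ), ∀ s : ℝ, |s - r| < ε →
      Integrable (fun x => |u x| ^ (2 * s)) μ ∧ 0 < ∫ x, |u x| ^ (2 * s) ∂μ)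
    (hlog : Integrable (fun x => |u x| ^ (2 * r) * |Real.log (abs (u x))|) μ) :
    Tendsto
      (fun ℓ : ℝ =>
        ((∫ x, |u x| ^ (2 * ℓ) ∂μ) ^ (1 / (2 * ℓ)) /
            (∫ x, |u x| ^ (2 * r) ∂μ) ^ (1 / (2 * r))) ^ (1 / (ℓ - r)))
      (𝓝[≠] r)
      (𝓝 (((∫ x, |u x| ^ (2 * r) ∂μ) ^ (1 / (2 * r))) ^ (-(1 / r)) *
        Real.exp ((∫ x, |u x| ^ (2 * r) * Real.log |u x| ∂μ) /
          (r * ∫ x, |u x| ^ (2 * r) ∂μ)))) := by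
  obtain ⟨ε, hε, h⟩ := hnear
  have hpos : 0 < ∫ x, |u x| ^ (2 * r) ∂μ := (h r (by simpa using hε)).2
  have hint : ∀ᶠ p in 𝓝 (2 * r), Integrable (fun x => |u x| ^ p) μ := by
    filter_upwards [Metric.ball_mem_nhds (2 * r) (mul_pos two_pos hε)] with p hp
    rw [Metric.mem_ball, Real.dist_eq, abs_lt] at hp
    simpa [mul_div_cancel₀] using (h (p / 2) (abs_lt.2 ⟨by linarith, by linarith⟩)).1
  have hr₂ : 2 * r ≠ 0 := by positivity
  have hI := hasDerivAt_integral_abs_rpow hu.aemeasurable hr₂ hint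
  have hnorm : HasDerivAt (fun ℓ => (∫ x, |u x| ^ (2 * ℓ) ∂μ) ^ (1 / (2 * ℓ))) _ r :=
    (hasDerivAt_rpow_one_div hI hpos hr₂).comp r (hasDerivAt_const_mul 2)
  have hnorm_pos := Real.rpow_pos_of_pos hpos (1 / (2 * r))
  convert tendsto_div_rpow_one_div_sub hnorm hnorm_pos using 2
  rw [mul_assoc, mul_div_cancel_left₀ _ hnorm_pos.ne', ← Real.rpow_mul hpos.le,
    Real.rpow_def_of_pos hpos, ← Real.exp_add]
  congr 1
  field_simp
  ring
end

section
/- Let (Q, μ) be a measure space, 0 < q < r, and u a measurable function on Q with 0 < ∫_Q |u|^{2q} dμ < ∞, 0 < ∫_Q |u|^{2r} dμ < ∞, and ∫_Q |u|^{2r} |ln|u|| dμ < ∞. Then (∫_Q |u|^{2r} ln|u| dμ) / (∫_Q |u|^{2r} dμ) ≥ [ ln(∫_Q |u|^{2r} dμ) − ln(∫_Q |u|^{2q} dμ) ] / (2(r−q)). -/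
open MeasureTheory

/-!
With `f = |u|^{2r}` and `g = |u|^{2q}` one has `f ln (f / g) = 2(r - q) |u|^{2r} ln |u|`, so the
bound is the log-sum inequality `(∫ f) ln (∫ f / ∫ g) ≤ ∫ f ln (f / g)`, which is Jensen's
inequality for `s ↦ s ln s` at `s = f / g` with respect to `g dμ / ∫ g dμ`. It comes from the
tangent line bound `a - b ≤ a ln (a / b)`, applied to `a = f` and to `b = (∫ f / ∫ g) g`, which has
the same integral as `f`.
-/

theorem sub_le_mul_log_div {a b : ℝ} (ha : 0 ≤ a) (hb : 0 ≤ b) (h : b = 0 → a = 0) :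
    a - b ≤ a * Real.log (a / b) := by
  rcases ha.eq_or_lt with rfl | ha
  · simpa using hb
  have hb : 0 < b := hb.lt_of_ne' fun hb => ha.ne' (h hb)
  calc a - b = a * (1 - (a / b)⁻¹) := by field_simp
    _ ≤ a * Real.log (a / b) := by
      gcongr
      exact Real.one_sub_inv_le_log_of_pos (by positivity)

theorem mul_log_div_const_mul {a b c : ℝ} (hc : c ≠ 0) (h : b = 0 → a = 0) :
    a * Real.log (a / (c * b)) = a * Real.log (a / b) - a * Real.log c := by
  by_cases ha : a = 0
  · simp [ha]
  · have hb : b ≠ 0 := mt h ha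
    rw [Real.log_div ha (mul_ne_zero hc hb), Real.log_mul hc hb, Real.log_div ha hb]
    ring

theorem rpow_mul_log_rpow_div_rpow {t : ℝ} (ht : 0 ≤ t) (p s : ℝ) :
    t ^ s * Real.log (t ^ s / t ^ p) = (s - p) * (t ^ s * Real.log t) := by
  rcases ht.eq_or_lt with rfl | ht
  · rcases eq_or_ne s 0 with rfl | hs
    · rcases eq_or_ne p 0 with rfl | hp
      · simp
      · simp [hp]
    · simp [hs]
  · rw [← Real.rpow_sub ht, Real.log_rpow ht]
    ring

section LogSum

variable {α : Type*} [MeasurableSpace α] {μ : Measure α} {f g : α → ℝ}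

theorem integral_pos_of_ae_eq_zero_imp (hg : 0 ≤ᵐ[μ] g) (hgi : Integrable g μ)
    (hgf : ∀ᵐ x ∂μ, g x = 0 → f x = 0) (hf : ∫ x, f x ∂μ ≠ 0) : 0 < ∫ x, g x ∂μ := by
  refine (integral_nonneg_of_ae hg).lt_of_ne' fun hg0 => hf (integral_eq_zero_of_ae ?_)
  filter_upwards [(integral_eq_zero_iff_of_nonneg_ae hg hgi).1 hg0, hgf] with x hx hgfx
    using hgfx hx

theorem integral_sub_integral_le_integral_mul_log_div (hf : 0 ≤ᵐ[μ] f) (hg : 0 ≤ᵐ[μ] g)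
    (hgf : ∀ᵐ x ∂μ, g x = 0 → f x = 0) (hfi : Integrable f μ) (hgi : Integrable g μ)
    (hlog : Integrable (fun x => f x * Real.log (f x / g x)) μ) :
    ∫ x, f x ∂μ - ∫ x, g x ∂μ ≤ ∫ x, f x * Real.log (f x / g x) ∂μ := by
  rw [← integral_sub hfi hgi]
  refine integral_mono_ae (hfi.sub hgi) hlog ?_
  filter_upwards [hf, hg, hgf] with x hfx hgx hgfx using sub_le_mul_log_div hfx hgx hgfx

theorem integral_mul_log_integral_div_le (hf : 0 ≤ᵐ[μ] f) (hg : 0 ≤ᵐ[μ] g)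
    (hgf : ∀ᵐ x ∂μ, g x = 0 → f x = 0) (hfi : Integrable f μ) (hgi : Integrable g μ)
    (hlog : Integrable (fun x => f x * Real.log (f x / g x)) μ) :
    (∫ x, f x ∂μ) * Real.log ((∫ x, f x ∂μ) / ∫ x, g x ∂μ) ≤
      ∫ x, f x * Real.log (f x / g x) ∂μ := by
  by_cases hf0 : ∫ x, f x ∂μ = 0
  · have hfae : f =ᵐ[μ] 0 := (integral_eq_zero_iff_of_nonneg_ae hf hfi).1 hf0
    rw [hf0, zero_mul, integral_eq_zero_of_ae (hfae.mono fun x hx => by simp [hx])]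
  have hfpos : 0 < ∫ x, f x ∂μ := (integral_nonneg_of_ae hf).lt_of_ne' hf0
  have hgpos : 0 < ∫ x, g x ∂μ := integral_pos_of_ae_eq_zero_imp hg hgi hgf hf0
  set c := (∫ x, f x ∂μ) / ∫ x, g x ∂μ with hc
  have hcpos : 0 < c := div_pos hfpos hgpos
  have hsplit : (fun x => f x * Real.log (f x / (c * g x))) =ᵐ[μ]
      fun x => f x * Real.log (f x / g x) - f x * Real.log c :=
    hgf.mono fun x hx => mul_log_div_const_mul hcpos.ne' hx
  have key := integral_sub_integral_le_integral_mul_log_div hf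
    (hg.mono fun x hx => mul_nonneg hcpos.le hx)
    (hgf.mono fun x hx hcg => hx ((mul_eq_zero_iff_left hcpos.ne').1 hcg))
    hfi (hgi.const_mul c) ((hlog.sub (hfi.mul_const _)).congr hsplit.symm)
  rw [integral_congr_ae hsplit, integral_sub hlog (hfi.mul_const _), integral_mul_const,
    integral_const_mul, hc, div_mul_cancel₀ _ hgpos.ne', sub_self] at key
  exact sub_nonneg.1 key

end LogSum

-- For `q < 0`, Lean's `|u x| ^ (2 * q)` is `0`, not `∞`, where `u x = 0`.
theorem log_moment_jensen_bound_general {Q : Type*} [MeasurableSpace Q] {μ : Measure Q}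
    {q r : ℝ} (hqr : q < r) {u : Q → ℝ} (hu : 0 ≤ q ∨ ∀ᵐ x ∂μ, u x ≠ 0)
    (hqi : Integrable (fun x => |u x| ^ (2 * q)) μ)
    (hri : Integrable (fun x => |u x| ^ (2 * r)) μ)
    (hrpos : 0 < ∫ x, |u x| ^ (2 * r) ∂μ)
    (hlog : Integrable (fun x => |u x| ^ (2 * r) * Real.log |u x|) μ) :
    (∫ x, |u x| ^ (2 * r) * Real.log |u x| ∂μ) / (∫ x, |u x| ^ (2 * r) ∂μ) ≥
      (Real.log (∫ x, |u x| ^ (2 * r) ∂μ) - Real.log (∫ x, |u x| ^ (2 * q) ∂μ)) /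
        (2 * (r - q)) := by
  have hnonneg (p : ℝ) : 0 ≤ᵐ[μ] fun x => |u x| ^ p := .of_forall fun x => by positivity
  have hvanish : ∀ᵐ x ∂μ, |u x| ^ (2 * q) = 0 → |u x| ^ (2 * r) = 0 := by
    rcases hu with hq | hu
    · refine .of_forall fun x hx => ?_
      rw [((Real.rpow_eq_zero_iff_of_nonneg (abs_nonneg _)).1 hx).1,
        Real.zero_rpow (by linarith)]
    · exact hu.mono fun x hx h => absurd h (Real.rpow_pos_of_pos (abs_pos.2 hx) _).ne'
  have hqpos := integral_pos_of_ae_eq_zero_imp (hnonneg _) hqi hvanish hrpos.ne'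
  have hratio (x : Q) := rpow_mul_log_rpow_div_rpow (abs_nonneg (u x)) (2 * q) (2 * r)
  have hlogSum := integral_mul_log_integral_div_le (hnonneg _) (hnonneg _) hvanish hri hqi
    (by simpa only [hratio] using hlog.const_mul (2 * r - 2 * q))
  simp only [hratio] at hlogSum
  rw [integral_const_mul, Real.log_div hrpos.ne' hqpos.ne', ← mul_sub] at hlogSum
  rw [ge_iff_le, div_le_div_iff₀ (by linarith) hrpos]
  linarith

/-- Jensen-type inequality: for `0 < q < r` and a measurable `u`
with `0 < ∫ |u|^{2q} < ∞`, `0 < ∫ |u|^{2r} < ∞`, `∫ |u|^{2r}|ln|u|| < ∞`,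
`(∫ |u|^{2r} ln|u|) / (∫ |u|^{2r}) ≥ [ln(∫ |u|^{2r}) − ln(∫ |u|^{2q})] / (2(r−q))`. -/
theorem log_moment_jensen_bound {Q : Type*} [MeasurableSpace Q] (μ : Measure Q)
    (q r : ℝ) (hq : 0 < q) (hqr : q < r) (u : Q → ℝ) (hu : Measurable u)
    (hqi : Integrable (fun x => |u x| ^ (2 * q)) μ)
    (hqpos : 0 < ∫ x, |u x| ^ (2 * q) ∂μ)
    (hri : Integrable (fun x => |u x| ^ (2 * r)) μ)
    (hrpos : 0 < ∫ x, |u x| ^ (2 * r) ∂μ)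
    (hlog : Integrable (fun x => |u x| ^ (2 * r) * |Real.log (abs (u x))|) μ) :
    (∫ x, |u x| ^ (2 * r) * Real.log |u x| ∂μ) / (∫ x, |u x| ^ (2 * r) ∂μ) ≥
      (Real.log (∫ x, |u x| ^ (2 * r) ∂μ) - Real.log (∫ x, |u x| ^ (2 * q) ∂μ)) /
        (2 * (r - q)) :=
  log_moment_jensen_bound_general hqr (.inl hq.le) hqi hri hrpos
    (hlog.mono (by fun_prop) (.of_forall fun x => by simp))
end
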